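/- arXiv:1611.07842 — 8 statements merged into one kernel-verified Lean document; each statement's English description precedes it below -/
import Mathlib

section
/- Let N be a positive integer and let A, B be N×N complex matrices such that [[A,B],A] = 0 (i.e., the commutator [A,B] = AB − BA commutes with A). Then for every integer k ≥ 1, the trace of [A,B]^k equals 0. -/
theorem lie_mul_of_commute {R : Type*} [NonUnitalRing R] {a c : R} (h : Commute c a) (b : R) :
    ⁅a, c * b⁆ = c * ⁅a, b⁆ := by
  rw [Ring.lie_def, Ring.lie_def, mul_sub, ← mul_assoc, ← h.eq, mul_assoc, mul_assoc]

theorem lie_pow_succ_eq_lie_of_commute {R : Type*} [Ring R] {a b : R} (h : Commute ⁅a, b⁆ a)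
    (m : ℕ) : ⁅a, b⁆ ^ (m + 1) = ⁅a, ⁅a, b⁆ ^ m * b⁆ := by
  rw [lie_mul_of_commute (h.pow_left m), pow_succ]

theorem trace_commutator_pow_eq_zero_general {n R : Type*} [Fintype n] [DecidableEq n] [CommRing R]
    {A B : Matrix n n R} (h : Commute ⁅A, B⁆ A) {k : ℕ} (hk : k ≠ 0) :
    (⁅A, B⁆ ^ k).trace = 0 := by
  obtain ⟨m, rfl⟩ := Nat.exists_eq_add_one_of_ne_zero hk
  rw [lie_pow_succ_eq_lie_of_commute h, LieAlgebra.matrix_trace_commutator_zero n R]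

/-- If the commutator `[A,B]` commutes with `A`, then `trace ([A,B]^k) = 0`
for every integer `k ≥ 1`. -/
theorem trace_commutator_pow_eq_zero (N : ℕ) (hN : 0 < N)
    (A B : Matrix (Fin N) (Fin N) ℂ)
    (h : (A * B - B * A) * A = A * (A * B - B * A)) :
    ∀ k : ℕ, 1 ≤ k → ((A * B - B * A) ^ k).trace = 0 :=
  fun _ hk ↦ trace_commutator_pow_eq_zero_general h (Nat.one_le_iff_ne_zero.mp hk)
end

section
/- (Jacobson's theorem.) Let N be a positive integer and let A, B be N×N complex matrices such that [[A,B],A] = 0. Then the commutator [A,B] is nilpotent. -/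
/-!
Write `C = ⁅A, B⁆`. Since `C` commutes with `A`, bracketing with `B` differentiates polynomials in
`A`: `⁅q(A), B⁆ = q'(A) C`. If `q(A) Cᵐ = 0`, then multiplying `q(A) B = B q(A) + q'(A) C` by `Cᵐ`
on both sides leaves `q'(A) C²ᵐ⁺¹ = 0`. Starting from an equation `q(A) = 0` (for matrices,
Cayley–Hamilton) and differentiating `n = deg q` times gives `n! a C ^ (2ⁿ - 1) = 0`, where `a` is
the leading coefficient of `q`; over `ℂ` the factor `n! a` can be cancelled.
-/

open Polynomial
open scoped Nat

theorem mul_lie_eq_add {S : Type*} [NonUnitalRing S] (a b c : S) :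
    ⁅a * b, c⁆ = a * ⁅b, c⁆ + ⁅a, c⁆ * b := by
  simp only [Ring.lie_def]
  noncomm_ring

theorem iterate_derivative_natDegree_eq_C {R : Type*} [Semiring R] (q : R[X]) :
    derivative^[q.natDegree] q = C (q.natDegree ! * q.leadingCoeff) := by
  have hdeg : (derivative^[q.natDegree] q).natDegree = 0 := by
    simpa using natDegree_iterate_derivative q q.natDegree
  rw [eq_C_of_natDegree_eq_zero hdeg, coeff_iterate_derivative, zero_add,
    Nat.descFactorial_self, nsmul_eq_mul, leadingCoeff]

theorem commute_aeval_right {R S : Type*} [CommSemiring R] [Semiring S] [Algebra R S] {a b : S}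
    (h : Commute a b) (q : R[X]) : Commute a (aeval b q) :=
  Algebra.commute_of_mem_adjoin_singleton_of_commute (aeval_mem_adjoin_singleton R b) h

section Commutator

variable {R S : Type*} [CommSemiring R] [Ring S] [Algebra R S] {A B : S}

theorem aeval_lie (h : Commute ⁅A, B⁆ A) (q : R[X]) :
    ⁅aeval A q, B⁆ = aeval A (derivative q) * ⁅A, B⁆ := by
  induction q using Polynomial.induction_on with
  | C r => simp [Ring.lie_def, Algebra.commutes r B]
  | add p q hp hq =>
    calc ⁅aeval A (p + q), B⁆ = ⁅aeval A p, B⁆ + ⁅aeval A q, B⁆ := by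
          simp only [map_add, Ring.lie_def, add_mul, mul_add, add_sub_add_comm]
      _ = aeval A (derivative (p + q)) * ⁅A, B⁆ := by
          rw [hp, hq, derivative_add, map_add, add_mul]
  | monomial n r ih =>
    rw [pow_succ, ← mul_assoc]
    generalize C r * X ^ n = p at ih ⊢
    calc ⁅aeval A (p * X), B⁆
        = aeval A p * ⁅A, B⁆ + aeval A (derivative p) * ⁅A, B⁆ * A := by
          rw [map_mul, aeval_X, mul_lie_eq_add, ih]
      _ = aeval A p * ⁅A, B⁆ + aeval A (derivative p) * A * ⁅A, B⁆ := by
          rw [mul_assoc _ _ A, h.eq, mul_assoc]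
      _ = aeval A (derivative (p * X)) * ⁅A, B⁆ := by
          simp [add_mul, add_comm]

theorem aeval_derivative_mul_lie_pow_eq_zero (h : Commute ⁅A, B⁆ A) {q : R[X]} {m : ℕ}
    (hq : aeval A q * ⁅A, B⁆ ^ m = 0) :
    aeval A (derivative q) * ⁅A, B⁆ ^ (2 * m + 1) = 0 := by
  have hq' : ⁅A, B⁆ ^ m * aeval A q = 0 := by rw [((commute_aeval_right h q).pow_left m).eq, hq]
  calc aeval A (derivative q) * ⁅A, B⁆ ^ (2 * m + 1)
      = aeval A (derivative q) * ⁅A, B⁆ ^ m * ⁅A, B⁆ * ⁅A, B⁆ ^ m := by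
        rw [mul_assoc _ _ ⁅A, B⁆, ← pow_succ, mul_assoc, ← pow_add, two_mul, add_right_comm]
    _ = ⁅A, B⁆ ^ m * (aeval A (derivative q) * ⁅A, B⁆) * ⁅A, B⁆ ^ m := by
        rw [← ((commute_aeval_right h (derivative q)).pow_left m).eq, mul_assoc (⁅A, B⁆ ^ m)]
    _ = ⁅A, B⁆ ^ m * aeval A q * B * ⁅A, B⁆ ^ m
          - ⁅A, B⁆ ^ m * B * (aeval A q * ⁅A, B⁆ ^ m) := by
        rw [← aeval_lie h, Ring.lie_def (aeval A q)]
        simp only [mul_sub, sub_mul, mul_assoc]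
    _ = 0 := by rw [hq', hq]; simp

theorem aeval_iterate_derivative_mul_lie_pow_eq_zero (h : Commute ⁅A, B⁆ A) {q : R[X]}
    (hq : aeval A q = 0) (k : ℕ) :
    aeval A (derivative^[k] q) * ⁅A, B⁆ ^ (2 ^ k - 1) = 0 := by
  induction k with
  | zero => simpa using hq
  | succ k ih =>
    have hexp : 2 ^ (k + 1) - 1 = 2 * (2 ^ k - 1) + 1 := by
      have := Nat.two_pow_pos k
      omega
    rw [Function.iterate_succ_apply', hexp]
    exact aeval_derivative_mul_lie_pow_eq_zero h ih

theorem factorial_mul_leadingCoeff_smul_lie_pow_eq_zero (h : Commute ⁅A, B⁆ A) {q : R[X]}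
    (hq : aeval A q = 0) :
    ((q.natDegree ! : R) * q.leadingCoeff) • ⁅A, B⁆ ^ (2 ^ q.natDegree - 1) = 0 := by
  have hpow := aeval_iterate_derivative_mul_lie_pow_eq_zero h hq q.natDegree
  rwa [iterate_derivative_natDegree_eq_C, aeval_C, ← Algebra.smul_def] at hpow

theorem commutator_nilpotent_of_commutes_general (h : Commute ⁅A, B⁆ A) {q : R[X]}
    (hq : aeval A q = 0) (hreg : IsSMulRegular S ((q.natDegree ! : R) * q.leadingCoeff)) :
    IsNilpotent ⁅A, B⁆ :=
  ⟨_, hreg.right_eq_zero_of_smul (factorial_mul_leadingCoeff_smul_lie_pow_eq_zero h hq)⟩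

end Commutator

/-- Jacobson's theorem: if the commutator `[A,B]` commutes with `A`,
then `[A,B]` is nilpotent. -/
theorem commutator_nilpotent_of_commutes (N : ℕ) (hN : 0 < N)
    (A B : Matrix (Fin N) (Fin N) ℂ)
    (h : (A * B - B * A) * A = A * (A * B - B * A)) :
    ∃ k : ℕ, 0 < k ∧ (A * B - B * A) ^ k = 0 := by
  obtain ⟨k, hk⟩ := commutator_nilpotent_of_commutes_general h A.aeval_self_charpoly
    (IsUnit.isSMulRegular _ (by simp [A.charpoly_monic.leadingCoeff, Nat.factorial_ne_zero]))
  exact ⟨k + 1, k.succ_pos, pow_eq_zero_of_le k.le_succ hk⟩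
end

section
/- Let N be a positive integer and let D, T be N×N complex matrices such that T commutes with [D,T] (i.e., [[D,T],T] = 0). Then [D,T] is not an invertible matrix. -/
/-!
If `⁅D, T⁆` has an inverse `B`, then `B` commutes with `T` because `⁅D, T⁆` does, and hence
`⁅D * B, T⁆ = ⁅D, T⁆ * B = 1`. But a commutator of matrices has trace zero, whereas the trace of
the identity is the size of the matrix.
-/

theorem mul_lie_of_commute {A : Type*} [NonUnitalRing A] {b y : A} (h : Commute y b) (x : A) :
    ⁅x * b, y⁆ = ⁅x, y⁆ * b := by
  simp only [Ring.lie_def, sub_mul, mul_assoc, h.eq]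

theorem exists_lie_eq_one_of_commute_of_isUnit {A : Type*} [Ring A] {x y : A}
    (hcomm : Commute y ⁅x, y⁆) (hunit : IsUnit ⁅x, y⁆) : ∃ z : A, ⁅z, y⁆ = 1 := by
  obtain ⟨u, hu⟩ := hunit
  have hinv : Commute y ↑u⁻¹ := (hu ▸ hcomm).units_inv_right
  exact ⟨x * ↑u⁻¹, by rw [mul_lie_of_commute hinv, ← hu, u.mul_inv]⟩

section Matrix

variable {n R : Type*} [Fintype n] [DecidableEq n] [CommRing R]

theorem matrix_lie_ne_one_of_card_ne_zero (hn : (Fintype.card n : R) ≠ 0) (X Y : Matrix n n R) :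
    ⁅X, Y⁆ ≠ 1 := by
  intro h
  apply hn
  calc (Fintype.card n : R) = Matrix.trace (1 : Matrix n n R) := Matrix.trace_one.symm
    _ = Matrix.trace ⁅X, Y⁆ := by rw [h]
    _ = 0 := LieAlgebra.matrix_trace_commutator_zero n R X Y

theorem commutator_not_invertible_general (hn : (Fintype.card n : R) ≠ 0) {D T : Matrix n n R}
    (h : Commute T ⁅D, T⁆) : ¬ IsUnit ⁅D, T⁆ := by
  intro hunit
  obtain ⟨E, hE⟩ := exists_lie_eq_one_of_commute_of_isUnit h hunit
  exact matrix_lie_ne_one_of_card_ne_zero hn E T hE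

end Matrix

/-- If `T` commutes with the commutator `[D,T]`, then `[D,T]` is not invertible. -/
theorem commutator_not_invertible (N : ℕ) (hN : 0 < N)
    (D T : Matrix (Fin N) (Fin N) ℂ)
    (h : (D * T - T * D) * T = T * (D * T - T * D)) :
    ¬ IsUnit (D * T - T * D) :=
  commutator_not_invertible_general (by simpa using hN.ne') h.symm
end

section
/- Let N be a positive integer, let j be an invertible Hermitian N×N complex matrix, and for A ∈ M_N(ℂ) define the Krein adjoint A^× := j⁻¹ A* j, where A* is the conjugate transpose. Let β be an invertible N×N complex matrix with β^× = β, and define A^{*_β} := β A^× β⁻¹. Then for any A ∈ M_N(ℂ), the identity (A^{*_β})^× = (A^×)^{*_β} holds if and only if A commutes with β². -/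
open Matrix

/-!
The Krein adjoint is injective and reverses products, and it fixes `β`, hence also `β⁻¹`. Therefore
`(β A^× β⁻¹)^× = β⁻¹ A^×× β`, so the two sides agree exactly when `A^××` commutes with `β²`. Since
`β² = (β²)^××` as well, injectivity removes the double adjoint on both sides.
-/

theorem units_inv_mul_mul_eq_mul_mul_inv_iff {M : Type*} [Monoid M] (u : Mˣ) (a : M) :
    ↑u⁻¹ * a * u = u * a * ↑u⁻¹ ↔ Commute a (u * u) := by
  rw [Units.eq_mul_inv_iff_mul_eq, mul_assoc, mul_assoc, Units.inv_mul_eq_iff_eq_mul,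
    commute_iff_eq, mul_assoc]

section KreinAdjoint

variable {M : Type*} [Monoid M] [StarMul M]

/-- The Krein adjoint `a^× = j⁻¹ a* j` in a monoid with involution. It is defined for every unit
`j`; it is itself an involution when `j` is self-adjoint. -/
def kreinAdjoint (j : Mˣ) (a : M) : M :=
  ↑j⁻¹ * star a * j

/-- The `β`-adjoint `a^{*_β} = β a^× β⁻¹`: the Krein adjoint with respect to `j`, conjugated by the
unit `β`. -/
def betaAdjoint (j β : Mˣ) (a : M) : M :=
  β * kreinAdjoint j a * ↑β⁻¹

theorem kreinAdjoint_one (j : Mˣ) : kreinAdjoint j (1 : M) = 1 := by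
  rw [kreinAdjoint, star_one, mul_one, Units.inv_mul]

theorem kreinAdjoint_mul (j : Mˣ) (a b : M) :
    kreinAdjoint j (a * b) = kreinAdjoint j b * kreinAdjoint j a := by
  simp only [kreinAdjoint, star_mul, mul_assoc, Units.mul_inv_cancel_left]

theorem kreinAdjoint_injective (j : Mˣ) : Function.Injective (kreinAdjoint j : M → M) := by
  intro a b h
  rwa [kreinAdjoint, kreinAdjoint, Units.mul_left_inj, Units.mul_right_inj, star_inj] at h

theorem commute_kreinAdjoint_iff (j : Mˣ) {a b : M} :
    Commute (kreinAdjoint j a) (kreinAdjoint j b) ↔ Commute a b := by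
  rw [commute_iff_eq, ← kreinAdjoint_mul, ← kreinAdjoint_mul, (kreinAdjoint_injective j).eq_iff,
    eq_comm, commute_iff_eq]

theorem kreinAdjoint_units_inv {j u : Mˣ} (hu : kreinAdjoint j (u : M) = u) :
    kreinAdjoint j (↑u⁻¹ : M) = ↑u⁻¹ := by
  refine (Units.inv_eq_of_mul_eq_one_right ?_).symm
  calc (u : M) * kreinAdjoint j ↑u⁻¹
      = kreinAdjoint j ↑u * kreinAdjoint j ↑u⁻¹ := by rw [hu]
    _ = kreinAdjoint j (↑u⁻¹ * ↑u) := (kreinAdjoint_mul j _ _).symm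
    _ = 1 := by rw [Units.inv_mul, kreinAdjoint_one]

theorem kreinAdjoint_betaAdjoint {j β : Mˣ} (hβ : kreinAdjoint j (β : M) = β) (a : M) :
    kreinAdjoint j (betaAdjoint j β a) = ↑β⁻¹ * kreinAdjoint j (kreinAdjoint j a) * β := by
  rw [betaAdjoint, kreinAdjoint_mul, kreinAdjoint_mul, kreinAdjoint_units_inv hβ, hβ, mul_assoc]

theorem krein_beta_adjoint_commute_iff_general {j β : Mˣ} (hβ : kreinAdjoint j (β : M) = β)
    (a : M) :
    kreinAdjoint j (betaAdjoint j β a) = betaAdjoint j β (kreinAdjoint j a) ↔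
      Commute a (β * β) := by
  have hββ : kreinAdjoint j (β * β : M) = β * β := by rw [kreinAdjoint_mul, hβ]
  calc kreinAdjoint j (betaAdjoint j β a) = betaAdjoint j β (kreinAdjoint j a)
      ↔ Commute (kreinAdjoint j (kreinAdjoint j a)) (β * β) := by
        rw [kreinAdjoint_betaAdjoint hβ, betaAdjoint, units_inv_mul_mul_eq_mul_mul_inv_iff]
    _ ↔ Commute (kreinAdjoint j (kreinAdjoint j a)) (kreinAdjoint j (kreinAdjoint j (β * β))) := by
        rw [hββ, hββ]
    _ ↔ Commute a (β * β) := by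
        rw [commute_kreinAdjoint_iff, commute_kreinAdjoint_iff]

end KreinAdjoint

/-- On `M_N(ℂ)` with Krein structure given by an invertible Hermitian `j`
(Krein adjoint `A^× = j⁻¹ Aᴴ j`) and an invertible `β` with `β^× = β`
(β-adjoint `A^{*_β} = β A^× β⁻¹`), one has `(A^{*_β})^× = (A^×)^{*_β}`
if and only if `A` commutes with `β²`. -/
theorem krein_beta_adjoint_commute_iff (N : ℕ) (hN : 0 < N)
    (j : Matrix (Fin N) (Fin N) ℂ) (hj : IsUnit j) (hjH : j.IsHermitian)
    (β : Matrix (Fin N) (Fin N) ℂ) (hβ : IsUnit β)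
    (hβx : j⁻¹ * βᴴ * j = β)
    (A : Matrix (Fin N) (Fin N) ℂ) :
    j⁻¹ * (β * (j⁻¹ * Aᴴ * j) * β⁻¹)ᴴ * j
      = β * (j⁻¹ * (j⁻¹ * Aᴴ * j)ᴴ * j) * β⁻¹
    ↔ A * (β * β) = (β * β) * A := by
  lift j to (Matrix (Fin N) (Fin N) ℂ)ˣ using hj
  lift β to (Matrix (Fin N) (Fin N) ℂ)ˣ using hβ
  rw [← coe_units_inv] at hβx
  simpa only [kreinAdjoint, betaAdjoint, coe_units_inv, star_eq_conjTranspose, commute_iff_eq]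
    using krein_beta_adjoint_commute_iff_general hβx A
end

section
/- Let V be a real vector space equipped with a symmetric bilinear form g, and let Λ : V → V be a linear map that is a g-isometry, i.e., g(Λx, Λy) = g(x, y) for all x, y ∈ V. Suppose u, w ∈ V and t ∈ ℝ with t ≠ 0 satisfy Λu = (cosh t)·u − (sinh t)·w and Λw = −(sinh t)·u + (cosh t)·w. Then g(u,u) + g(w,w) = 0 and g(u,w) = 0. -/
/-! In the plane of a boost the two light-cone vectors `u + w` and `u - w` are eigenvectors, with
eigenvalues `exp (-t)` and `exp t`. An isometry can rescale a vector `x` by `μ` with `μ ^ 2 ≠ 1`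
only if `g x x = 0`, so both are null, and polarization gives the two identities. -/

section BilinForm

variable {R M : Type*} [CommRing R] [NoZeroDivisors R] [AddCommGroup M] [Module R M]
  {B : LinearMap.BilinForm R M} {u w : M}

theorem bilinForm_self_eq_zero_of_mem_eigenspace {f : Module.End R M} {x : M} {μ : R}
    (hf : B (f x) (f x) = B x x) (hx : x ∈ f.eigenspace μ) (hμ : μ ^ 2 ≠ 1) : B x x = 0 := by
  rw [Module.End.mem_eigenspace_iff.mp hx, LinearMap.BilinForm.smul_left,
    LinearMap.BilinForm.smul_right] at hf
  have scaled : (μ ^ 2 - 1) * B x x = 0 := by linear_combination hf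
  exact (mul_eq_zero.mp scaled).resolve_left (sub_ne_zero.mpr hμ)

theorem bilinForm_self_add_self_eq_zero_of_null_add_sub [NeZero (2 : R)]
    (hadd : B (u + w) (u + w) = 0) (hsub : B (u - w) (u - w) = 0) : B u u + B w w = 0 := by
  simp only [map_add, map_sub, LinearMap.add_apply, LinearMap.sub_apply] at hadd hsub
  have parallelogram : 2 * (B u u + B w w) = 0 := by linear_combination hadd + hsub
  exact (mul_eq_zero.mp parallelogram).resolve_left two_ne_zero

theorem bilinForm_eq_zero_of_null_add_sub [NeZero (2 : R)] (hB : B u w = B w u)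
    (hadd : B (u + w) (u + w) = 0) (hsub : B (u - w) (u - w) = 0) : B u w = 0 := by
  have hdiag := bilinForm_self_add_self_eq_zero_of_null_add_sub hadd hsub
  simp only [map_add, LinearMap.add_apply] at hadd
  have polarization : 2 * B u w = 0 := by linear_combination hadd - hdiag + hB
  exact (mul_eq_zero.mp polarization).resolve_left two_ne_zero

theorem boost_forces_null_pair_general [NeZero (2 : R)] (hB : B u w = B w u)
    {f : Module.End R M} (hf : ∀ x, B (f x) (f x) = B x x) {c s : R}
    (hsub : (c - s) ^ 2 ≠ 1) (hadd : (c + s) ^ 2 ≠ 1)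
    (hu : f u = c • u - s • w) (hw : f w = -s • u + c • w) :
    B u u + B w w = 0 ∧ B u w = 0 := by
  have add_mem : u + w ∈ f.eigenspace (c - s) := by
    rw [Module.End.mem_eigenspace_iff, map_add, hu, hw]
    module
  have sub_mem : u - w ∈ f.eigenspace (c + s) := by
    rw [Module.End.mem_eigenspace_iff, map_sub, hu, hw]
    module
  have add_null := bilinForm_self_eq_zero_of_mem_eigenspace (hf _) add_mem hsub
  have sub_null := bilinForm_self_eq_zero_of_mem_eigenspace (hf _) sub_mem hadd
  exact ⟨bilinForm_self_add_self_eq_zero_of_null_add_sub add_null sub_null,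
    bilinForm_eq_zero_of_null_add_sub hB add_null sub_null⟩

end BilinForm

theorem real_exp_sq_ne_one {t : ℝ} (ht : t ≠ 0) : Real.exp t ^ 2 ≠ 1 := by
  rwa [Ne, pow_eq_one_iff_of_nonneg (Real.exp_pos t).le two_ne_zero, Real.exp_eq_one_iff]

/-- If a `g`-isometry `Λ` acts on a pair of vectors `u, w` as a hyperbolic
rotation of nonzero parameter `t` (a "boost" in the plane spanned by `u, w`),
then `g(u,u) + g(w,w) = 0` and `g(u,w) = 0`. -/
theorem boost_forces_null_pair {V : Type*} [AddCommGroup V] [Module ℝ V]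
    (g : LinearMap.BilinForm ℝ V) (hsymm : ∀ x y, g x y = g y x)
    (Λ : V →ₗ[ℝ] V) (hiso : ∀ x y, g (Λ x) (Λ y) = g x y)
    (u w : V) (t : ℝ) (ht : t ≠ 0)
    (hu : Λ u = Real.cosh t • u - Real.sinh t • w)
    (hw : Λ w = -Real.sinh t • u + Real.cosh t • w) :
    g u u + g w w = 0 ∧ g u w = 0 :=
  boost_forces_null_pair_general (hsymm u w) (fun x ↦ hiso x x)
    (Real.cosh_sub_sinh t ▸ real_exp_sq_ne_one (neg_ne_zero.mpr ht))
    (Real.cosh_add_sinh t ▸ real_exp_sq_ne_one ht) hu hw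
end

section
/- Let b, c be nonzero real numbers, D = [[0, b], [c, 0]] ∈ M₂(ℂ), and π : ℂ² → M₂(ℂ) the diagonal embedding π(a₁, a₂) = diag(a₁, a₂). Let λ, μ ∈ ℝ and β = [[0, λ], [μ, 0]]. Then there exists δ ∈ ℂ² with β = i·[D, π(δ)] if and only if λ·c + μ·b = 0 (equivalently λ/b + μ/c = 0). In particular, there exist λ > 0 and μ > 0 with this property if and only if b·c < 0. -/
/-!
Commuting `D` with a diagonal matrix scales each entry by a difference of diagonal entries, so the
exact 1-forms are the antidiagonal matrices whose entries are proportional to `(b, -c)`. As `(b, c)`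
is nonzero, this line of pairs `(λ, μ)` is cut out by the single equation `λc + μb = 0`, and it
meets the open positive quadrant precisely when `b` and `-c` have the same strict sign.
-/

open Matrix

/-- The diagonal representation of `ℂ²` on `ℂ²`. -/
noncomputable def diagRep (a : ℂ × ℂ) : Matrix (Fin 2) (Fin 2) ℂ :=
  !![a.1, 0; 0, a.2]

/-- `ω` is an exact 1-form for the spectral data `(ℂ², π, D)`, where `π` is `diagRep`. The factor
`i` follows the convention `δ ↦ i[D, π(δ)]` for the differential. -/
def IsExactOneForm (D ω : Matrix (Fin 2) (Fin 2) ℂ) : Prop :=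
  ∃ δ : ℂ × ℂ, ω = Complex.I • ⁅D, diagRep δ⁆

lemma lie_diagonal_apply {n R : Type*} [Fintype n] [DecidableEq n] [CommRing R]
    (A : Matrix n n R) (d : n → R) (i j : n) :
    ⁅A, diagonal d⁆ i j = A i j * (d j - d i) := by
  rw [Ring.lie_def, Matrix.sub_apply, mul_diagonal, diagonal_mul]
  ring

lemma lie_antidiag_diag {R : Type*} [CommRing R] (b c x y : R) :
    ⁅!![0, b; c, 0], !![x, 0; 0, y]⁆ = !![0, b * (y - x); -(c * (y - x)), 0] := by
  rw [← diagonal_vec2]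
  ext i j
  rw [lie_diagonal_apply]
  fin_cases i <;> fin_cases j <;> simp [← mul_neg]

lemma isExactOneForm_antidiag_iff_exists {b c l m : ℂ} :
    IsExactOneForm !![0, b; c, 0] !![0, l; m, 0] ↔ ∃ t, l = b * t ∧ m = -(c * t) := by
  have entries (δ : ℂ × ℂ) :
      !![0, l; m, 0] = Complex.I • ⁅!![0, b; c, 0], diagRep δ⁆ ↔
        l = b * (Complex.I * (δ.2 - δ.1)) ∧ m = -(c * (Complex.I * (δ.2 - δ.1))) := by
    rw [diagRep, lie_antidiag_diag]
    simp [mul_left_comm]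
  simp only [IsExactOneForm, entries]
  constructor
  · rintro ⟨δ, h⟩
    exact ⟨_, h⟩
  · rintro ⟨t, h⟩
    have surj : Complex.I * (-Complex.I * t - 0) = t := by
      linear_combination -t * Complex.I_sq
    exact ⟨(0, -Complex.I * t), by rwa [surj]⟩

lemma exists_eq_mul_and_eq_neg_mul_iff {K : Type*} [Field K] {b c l m : K} (h : b ≠ 0 ∨ c ≠ 0) :
    (∃ t, l = b * t ∧ m = -(c * t)) ↔ l * c + m * b = 0 := by
  constructor
  · rintro ⟨t, rfl, rfl⟩
    ring
  · intro hlm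
    rcases h with hb | hc
    · exact ⟨l / b, by field_simp, by field_simp; linear_combination hlm⟩
    · exact ⟨-m / c, by field_simp; linear_combination hlm, by field_simp⟩

lemma isExactOneForm_antidiag_iff {b c l m : ℂ} (h : b ≠ 0 ∨ c ≠ 0) :
    IsExactOneForm !![0, b; c, 0] !![0, l; m, 0] ↔ l * c + m * b = 0 :=
  isExactOneForm_antidiag_iff_exists.trans (exists_eq_mul_and_eq_neg_mul_iff h)

lemma exists_pos_mul_add_mul_eq_zero_iff {R : Type*} [CommRing R] [LinearOrder R]
    [IsStrictOrderedRing R] {b c : R} (h : b ≠ 0 ∨ c ≠ 0) :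
    (∃ l m : R, 0 < l ∧ 0 < m ∧ l * c + m * b = 0) ↔ b * c < 0 := by
  constructor
  · rintro ⟨l, m, hl, hm, hlm⟩
    have hb : b ≠ 0 := by
      rintro rfl
      simp_all [hl.ne']
    have hlbc : l * (b * c) = -(m * b ^ 2) := by linear_combination b * hlm
    have : l * (b * c) < 0 := hlbc ▸ neg_neg_of_pos (by positivity)
    exact (pos_iff_neg_of_mul_neg this).mp hl
  · intro hbc
    have hb : b ≠ 0 := left_ne_zero_of_mul hbc.ne
    exact ⟨b ^ 2, -(b * c), by positivity, neg_pos.mpr hbc, by ring⟩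

/-- For `D = [[0,b],[c,0]]` with `b, c` nonzero reals, the 1-form
`β = [[0,λ],[μ,0]]` (with `λ, μ` real) is exact, i.e. `β = i[D, π(δ)]` for some
`δ ∈ ℂ²`, iff `λc + μb = 0`; and an exact such `β` with `λ, μ > 0` exists iff
`bc < 0`. -/
theorem exact_one_form_iff (b c : ℝ) (hb : b ≠ 0) (hc : c ≠ 0) :
    (∀ lam mu : ℝ,
      (∃ δ : ℂ × ℂ,
        (!![0, (lam : ℂ); (mu : ℂ), 0] : Matrix (Fin 2) (Fin 2) ℂ) =
          Complex.I • (!![0, (b : ℂ); (c : ℂ), 0] * diagRep δ -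
            diagRep δ * !![0, (b : ℂ); (c : ℂ), 0]))
      ↔ lam * c + mu * b = 0)
    ∧ ((∃ lam mu : ℝ, 0 < lam ∧ 0 < mu ∧
        ∃ δ : ℂ × ℂ,
          (!![0, (lam : ℂ); (mu : ℂ), 0] : Matrix (Fin 2) (Fin 2) ℂ) =
            Complex.I • (!![0, (b : ℂ); (c : ℂ), 0] * diagRep δ -
              diagRep δ * !![0, (b : ℂ); (c : ℂ), 0]))
      ↔ b * c < 0) := by
  have exact_iff (lam mu : ℝ) :
      IsExactOneForm !![0, (b : ℂ); (c : ℂ), 0] !![0, (lam : ℂ); (mu : ℂ), 0] ↔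
        lam * c + mu * b = 0 := by
    rw [isExactOneForm_antidiag_iff (.inl (Complex.ofReal_ne_zero.mpr hb))]
    norm_cast
  refine ⟨exact_iff, Iff.trans ?_ (exists_pos_mul_add_mul_eq_zero_iff (.inl hb))⟩
  exact exists₂_congr fun lam mu ↦ and_congr_right' (and_congr_right' (exact_iff lam mu))
end

section
/- Let Q and Q' be quadratic forms on real vector spaces X and X', let S and S' be nonzero real vector spaces, and let ρ : Cl(Q) → End(S) and ρ' : Cl(Q') → End(S') be unital ℝ-algebra homomorphisms from the Clifford algebras. Suppose h : S → S' is a linear isomorphism and Λ : X → X' is a linear map such that h ∘ ρ(ι(v)) = ρ'(ι(Λv)) ∘ h for all v ∈ X, where ι denotes the canonical embedding of a vector space into its Clifford algebra. Then Q'(Λv) = Q(v) for all v ∈ X; in particular Λ is an isometry of quadratic spaces. -/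
section CliffordModule

variable {R X X' S S' : Type*} [CommRing R]
  [AddCommGroup X] [Module R X] [AddCommGroup X'] [Module R X']
  [AddCommGroup S] [Module R S] [AddCommGroup S'] [Module R S']

theorem cliffordModule_ι_apply_ι_apply (Q : QuadraticForm R X)
    (ρ : CliffordAlgebra Q →ₐ[R] Module.End R S) (v : X) (s : S) :
    ρ (CliffordAlgebra.ι Q v) (ρ (CliffordAlgebra.ι Q v) s) = Q v • s :=
  LinearMap.congr_fun (CliffordAlgebra.comp_ι_sq_scalar ρ v) s

theorem quadraticForm_smul_intertwiner_apply_eq (Q : QuadraticForm R X) (Q' : QuadraticForm R X')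
    (ρ : CliffordAlgebra Q →ₐ[R] Module.End R S) (ρ' : CliffordAlgebra Q' →ₐ[R] Module.End R S')
    (h : S →ₗ[R] S') {v : X} {v' : X'}
    (hcomm : h ∘ₗ ρ (CliffordAlgebra.ι Q v) = ρ' (CliffordAlgebra.ι Q' v') ∘ₗ h) (s : S) :
    Q' v' • h s = Q v • h s := by
  have hcomm_apply (t : S) :
      h (ρ (CliffordAlgebra.ι Q v) t) = ρ' (CliffordAlgebra.ι Q' v') (h t) :=
    LinearMap.congr_fun hcomm t
  calc
    Q' v' • h s = ρ' (CliffordAlgebra.ι Q' v') (ρ' (CliffordAlgebra.ι Q' v') (h s)) :=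
      (cliffordModule_ι_apply_ι_apply Q' ρ' v' (h s)).symm
    _ = h (ρ (CliffordAlgebra.ι Q v) (ρ (CliffordAlgebra.ι Q v) s)) := by
      rw [hcomm_apply, hcomm_apply]
    _ = Q v • h s := by rw [cliffordModule_ι_apply_ι_apply, map_smul]

/-- Faithfulness of the range covers injective `h` on a faithful `S`, surjective `h` onto a faithful
`S'`, and any nonzero `h` over a field. -/
theorem clifford_intertwiner_isometry_general (Q : QuadraticForm R X) (Q' : QuadraticForm R X')
    (ρ : CliffordAlgebra Q →ₐ[R] Module.End R S) (ρ' : CliffordAlgebra Q' →ₐ[R] Module.End R S')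
    (h : S →ₗ[R] S') [FaithfulSMul R h.range] (Λ : X → X')
    (hcomm : ∀ v : X,
      h ∘ₗ ρ (CliffordAlgebra.ι Q v) = ρ' (CliffordAlgebra.ι Q' (Λ v)) ∘ₗ h) :
    ∀ v : X, Q' (Λ v) = Q v := by
  intro v
  refine FaithfulSMul.eq_of_smul_eq_smul (α := h.range) ?_
  rintro ⟨_, s, rfl⟩
  exact Subtype.ext (quadraticForm_smul_intertwiner_apply_eq Q Q' ρ ρ' h (hcomm v) s)

end CliffordModule

/-- If `h : S ≃ S'` intertwines Clifford module structures via a linear map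
`Λ : X → X'` (i.e. `h ∘ ρ(ι v) = ρ'(ι (Λ v)) ∘ h` for all `v`), then `Λ` is an
isometry: `Q'(Λ v) = Q v` for all `v`. -/
theorem clifford_intertwiner_isometry
    {X X' S S' : Type*}
    [AddCommGroup X] [Module ℝ X] [AddCommGroup X'] [Module ℝ X']
    [AddCommGroup S] [Module ℝ S] [Nontrivial S]
    [AddCommGroup S'] [Module ℝ S'] [Nontrivial S']
    (Q : QuadraticForm ℝ X) (Q' : QuadraticForm ℝ X')
    (ρ : CliffordAlgebra Q →ₐ[ℝ] Module.End ℝ S)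
    (ρ' : CliffordAlgebra Q' →ₐ[ℝ] Module.End ℝ S')
    (h : S ≃ₗ[ℝ] S') (Λ : X →ₗ[ℝ] X')
    (hcomm : ∀ v : X,
      h.toLinearMap ∘ₗ ρ (CliffordAlgebra.ι Q v)
        = ρ' (CliffordAlgebra.ι Q' (Λ v)) ∘ₗ h.toLinearMap) :
    ∀ v : X, Q' (Λ v) = Q v := by
  have : Nontrivial h.toLinearMap.range :=
    (LinearEquiv.ofInjective h.toLinearMap h.injective).symm.toEquiv.nontrivial
  exact clifford_intertwiner_isometry_general Q Q' ρ ρ' h.toLinearMap Λ hcomm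
end

section
/- Let E be a finite nonempty set, θ : E → ℝ, and c : E → ℂ. Let M be the complex matrix indexed by E × {0, 1} whose only nonzero entries are M((e,0),(e,1)) = c(e)·exp(iθ(e)) and M((e,1),(e,0)) = −c(e)·exp(−iθ(e)) for each e ∈ E. Then the operator norm of M acting on the Hermitian inner product space ℂ^{E × {0,1}} equals max_{e ∈ E} |c(e)|. -/
/-!
The involution `(e, 0) ↔ (e, 1)` locates the only nonzero entry in each row, so `M` is a diagonal
matrix times a permutation matrix. Permutation matrices are unitary, hence by the C⋆-identity they
do not affect the operator norm, and the norm of a diagonal matrix is the largest modulus of its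
entries. Here these moduli are `|c e|`, each occurring twice, since the phases lie on the unit
circle.
-/

open Matrix

section PiNorm

variable {ι κ : Type*} [Fintype ι] [Fintype κ]

lemma pi_norm_eq_sup'_norm [Nonempty ι] {G : ι → Type*} [∀ i, SeminormedAddGroup (G i)]
    (x : ∀ i, G i) : ‖x‖ = Finset.univ.sup' Finset.univ_nonempty fun i => ‖x i‖ :=
  eq_of_forall_ge_iff fun r => by simp [pi_norm_le_iff_of_nonempty]

lemma pi_norm_eq_of_surjective {G : ι → Type*} {H : κ → Type*}
    [∀ i, SeminormedAddGroup (G i)] [∀ k, SeminormedAddGroup (H k)] {f : ι → κ}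
    (hf : f.Surjective) {x : ∀ i, G i} {y : ∀ k, H k} (hxy : ∀ i, ‖x i‖ = ‖y (f i)‖) :
    ‖x‖ = ‖y‖ := by
  apply le_antisymm
  · refine (pi_norm_le_iff_of_nonneg (norm_nonneg y)).2 fun i => ?_
    exact (hxy i).trans_le (norm_le_pi_norm y (f i))
  · refine (pi_norm_le_iff_of_nonneg (norm_nonneg x)).2 (hf.forall.2 fun i => ?_)
    exact (hxy i).symm.trans_le (norm_le_pi_norm x i)

end PiNorm

section MonomialMatrix

variable {n : Type*} [Fintype n] [DecidableEq n]

lemma permMatrix_mem_unitary {R : Type*} [Semiring R] [StarRing R] (σ : Equiv.Perm n) :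
    σ.permMatrix R ∈ unitary (Matrix n n R) := by
  rw [Unitary.mem_iff, star_eq_conjTranspose, conjTranspose_permMatrix, ← permMatrix_mul,
    ← permMatrix_mul, mul_inv_cancel, inv_mul_cancel, permMatrix_one]
  exact ⟨rfl, rfl⟩

lemma diagonal_mul_permMatrix_apply {R : Type*} [NonAssocSemiring R] (d : n → R)
    (σ : Equiv.Perm n) (i j : n) :
    (diagonal d * σ.permMatrix R) i j = if σ i = j then d i else 0 := by
  simp [PEquiv.toMatrix_apply, eq_comm]

open scoped Matrix.Norms.L2Operator in
lemma l2_opNorm_diagonal_mul_permMatrix {𝕜 : Type*} [RCLike 𝕜] (d : n → 𝕜)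
    (σ : Equiv.Perm n) : ‖diagonal d * σ.permMatrix 𝕜‖ = ‖d‖ := by
  rw [CStarRing.norm_mul_mem_unitary _ (permMatrix_mem_unitary (R := 𝕜) σ), l2_opNorm_diagonal]

end MonomialMatrix

section SplitGraph

variable {E : Type*} (θ : E → ℝ) (c : E → ℂ)

variable (E) in
/-- The involution of the split graph exchanging the two copies `(e, 0)` and `(e, 1)` of each
edge `e`, with `0` and `1` encoded as `false` and `true`. -/
def edgeFlip : Equiv.Perm (E × Bool) :=
  (Equiv.refl E).prodCongr Equiv.boolNot

/-- The weights of the split graph matrix: the value at `p` is its entry in row `p` and column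
`edgeFlip E p`. -/
noncomputable def splitWeight : E × Bool → ℂ
  | (e, false) => c e * Complex.exp (Complex.I * θ e)
  | (e, true) => -(c e * Complex.exp (-(Complex.I * θ e)))

lemma norm_splitWeight (p : E × Bool) : ‖splitWeight θ c p‖ = ‖c p.1‖ := by
  obtain ⟨e, _ | _⟩ := p <;> simp [splitWeight, Complex.norm_exp]

end SplitGraph

/-- The operator norm of the block matrix with `2×2` antisymmetric-type blocks
`[[0, c(e)·e^{iθ(e)}], [-c(e)·e^{-iθ(e)}, 0]]` on `ℂ^{E × {0,1}}` equals
`max_{e} |c(e)|`. -/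
theorem opNorm_split_graph_matrix {E : Type*} [Fintype E] [DecidableEq E]
    [Nonempty E] (θ : E → ℝ) (c : E → ℂ)
    (M : Matrix (E × Bool) (E × Bool) ℂ)
    (hM : ∀ p q : E × Bool,
      M p q =
        if p.1 = q.1 ∧ p.2 = false ∧ q.2 = true then
          c p.1 * Complex.exp (Complex.I * (θ p.1 : ℂ))
        else if p.1 = q.1 ∧ p.2 = true ∧ q.2 = false then
          -(c p.1 * Complex.exp (-(Complex.I * (θ p.1 : ℂ))))
        else 0) :
    ‖Matrix.toEuclideanCLM (𝕜 := ℂ) M‖ =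
      Finset.univ.sup' Finset.univ_nonempty fun e : E => ‖c e‖ := by
  have hfactor : M = diagonal (splitWeight θ c) * (edgeFlip E).permMatrix ℂ := by
    ext ⟨e, b⟩ ⟨e', b'⟩
    rw [hM, diagonal_mul_permMatrix_apply]
    cases b <;> cases b' <;> simp [edgeFlip, splitWeight]
  calc ‖Matrix.toEuclideanCLM (𝕜 := ℂ) M‖
      = ‖splitWeight θ c‖ := by
        rw [l2_opNorm_toEuclideanCLM, hfactor, l2_opNorm_diagonal_mul_permMatrix]
    _ = ‖c‖ := pi_norm_eq_of_surjective Prod.fst_surjective (norm_splitWeight θ c)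
    _ = Finset.univ.sup' Finset.univ_nonempty fun e : E => ‖c e‖ := pi_norm_eq_sup'_norm c
end
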